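/- arXiv:2305.02183 — 5 statements merged into one kernel-verified Lean document; each statement's English description precedes it below -/
import Mathlib

section
/- Let A be a finite-dimensional real affine space with affine basis (R_0, …, R_n), and let B be a real affine space (a torsor over a real vector space). Given points Q_{ij} ∈ B for 0 ≤ i, j ≤ n with Q_{ij} = Q_{ji}, there exists a unique quadratic map δ : A → B such that δ(midpoint(R_i, R_j)) = Q_{ij} for all i, j. Moreover δ is given by δ(P) = Σ_{i,j} p_i p_j · Δ_{ij}, where (p_0, …, p_n) are the barycentric coordinates of P and Δ_{ij} = 2·Q_{ij} − (1/2)·Q_{ii} − (1/2)·Q_{jj} (an affine combination in B; note that Σ_{i,j} p_i p_j = 1, so the formula is a well-defined affine combination of the points Δ_{ij}). -/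
/-- A map `δ` between real affine spaces is *quadratic* if for all points `P, Q` and
all `α, β ∈ ℝ` with `α + β = 1`,
`δ(α·P + β·Q)` is the affine combination of `δ(P)`, `δ(Q)`, `δ(midpoint P Q)` with
weights `α(α − β)`, `β(β − α)`, `4αβ` (note `α·P + β·Q = lineMap P Q β`). -/
def IsQuadraticMap {V A W B : Type*} [AddCommGroup V] [Module ℝ V] [AddTorsor V A]
    [AddCommGroup W] [Module ℝ W] [AddTorsor W B] (δ : A → B) : Prop :=
  ∀ (P Q : A) (α β : ℝ), α + β = 1 →
    δ (AffineMap.lineMap P Q β) =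
      ((α * (α - β)) • (δ P -ᵥ δ (midpoint ℝ P Q)) +
        (β * (β - α)) • (δ Q -ᵥ δ (midpoint ℝ P Q))) +ᵥ δ (midpoint ℝ P Q)

/-!
The blossom of `δ` is the symmetric map
`(X, Y) ↦ 2 δ(midpoint X Y) - δ(X)/2 - δ(Y)/2`, whose restriction to the diagonal is `δ`. If it is
affine in each variable, then `δ(Σ w_i R_i) = Σ w_i w_j Δ_ij`, where `Δ_ij` is the blossom at
`(R_i, R_j)`; this gives uniqueness and the formula.

Seen from an origin `X`, the blossom `Y ↦ blossom δ X Y` is the constant `δ(X)` plus a multiple of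
the odd part of `δ`, so everything rests on the fact that an odd quadratic map `L` between vector
spaces is linear. Homogeneity is the quadratic identity on the line through `-v` and `v`. For
additivity, `L(2x + y)` is computed in two ways: as an extrapolation of `x` and `-y`, and, up to the
factor `3`, as an interpolation of `x` and `y`. Adding the same with `x` and `y` exchanged, the
unknown `L(x - y)` cancels and `L(x + y) = L(x) + L(y)` remains.

For existence, an affine basis lets one prescribe the values `Δ_ij` of a biaffine map freely, and
the restriction of a biaffine map to the diagonal is quadratic.
-/

open Finset AffineMap

theorem affineCombination_affineCombination_eq_product {k V P ι κ : Type*} [Ring k]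
    [AddCommGroup V] [Module k V] [AddTorsor V P] {s : Finset ι} {t : Finset κ} {w : ι → k}
    {v : κ → k} (hw : ∑ i ∈ s, w i = 1) (hv : ∑ j ∈ t, v j = 1) (p : ι → κ → P) :
    s.affineCombination k (fun i => t.affineCombination k (p i) v) w =
      (s ×ˢ t).affineCombination k (fun ij => p ij.1 ij.2) (fun ij => w ij.1 * v ij.2) := by
  have hwv : ∑ ij ∈ s ×ˢ t, w ij.1 * v ij.2 = 1 := by
    rw [sum_product, ← sum_mul_sum, hw, hv, one_mul]
  obtain ⟨c⟩ : Nonempty P := inferInstance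
  rw [← vsub_left_cancel_iff (p := c), ← sum_smul_vsub_const_eq_affineCombination_vsub _ _ _ _ hw,
    ← sum_smul_vsub_const_eq_affineCombination_vsub _ _ _ _ hwv, sum_product]
  simp only [← sum_smul_vsub_const_eq_affineCombination_vsub _ _ _ _ hv, smul_sum, mul_smul]

theorem exists_affineMap_apply_basis_eq {k V A W B ι : Type*} [Ring k] [AddCommGroup V]
    [Module k V] [AddTorsor V A] [AddCommGroup W] [Module k W] [AddTorsor W B]
    (b : AffineBasis ι k A) (q : ι → B) : ∃ f : A →ᵃ[k] B, ∀ i, f (b i) = q i := by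
  obtain ⟨o⟩ := b.nonempty
  let L : V →ₗ[k] W := (b.basisOf o).constr ℕ fun j => q j -ᵥ q o
  refine ⟨(AffineEquiv.vaddConst k (q o)).toAffineMap.comp
    (L.toAffineMap.comp (AffineEquiv.vaddConst k (b o)).symm.toAffineMap), fun i => ?_⟩
  change L (b i -ᵥ b o) +ᵥ q o = q i
  obtain rfl | hi := eq_or_ne i o
  · simp
  · rw [← b.basisOf_apply o ⟨i, hi⟩, Module.Basis.constr_basis, vsub_vadd]

section Blossom

variable {V A W B : Type*} [AddCommGroup V] [Module ℝ V] [AddTorsor V A]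
  [AddCommGroup W] [Module ℝ W] [AddTorsor W B]

/-- The point `2 q - x / 2 - y / 2`, i.e. the value at `(X, Y)` of the symmetric biaffine map whose
restriction to the diagonal takes the values `q`, `x`, `y` at `midpoint X Y`, `X`, `Y`. -/
noncomputable def blossomPoint (q x y : B) : B :=
  univ.affineCombination ℝ ![q, x, y] ![(2 : ℝ), -(1 / 2 : ℝ), -(1 / 2 : ℝ)]

theorem blossomPoint_vsub (q x y c : B) :
    blossomPoint q x y -ᵥ c =
      (2 : ℝ) • (q -ᵥ c) - (1 / 2 : ℝ) • (x -ᵥ c) - (1 / 2 : ℝ) • (y -ᵥ c) := by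
  have hw : ∑ i, ![(2 : ℝ), -(1 / 2 : ℝ), -(1 / 2 : ℝ)] i = 1 := by
    norm_num [Fin.sum_univ_succ]
  rw [blossomPoint, ← sum_smul_vsub_const_eq_affineCombination_vsub _ _ _ _ hw]
  simp only [Fin.sum_univ_three, Matrix.cons_val]
  module

theorem blossomPoint_right_comm (q x y : B) : blossomPoint q x y = blossomPoint q y x := by
  rw [← vsub_left_cancel_iff (p := q), blossomPoint_vsub, blossomPoint_vsub, sub_right_comm]

@[simp]
theorem blossomPoint_self (q : B) : blossomPoint q q q = q := by
  rw [← vsub_left_cancel_iff (p := q), blossomPoint_vsub]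
  module

theorem blossomPoint_left_inj {q q' x y : B} :
    blossomPoint q x y = blossomPoint q' x y ↔ q = q' := by
  rw [← vsub_left_cancel_iff (p := q'), blossomPoint_vsub, blossomPoint_vsub, sub_left_inj,
    sub_left_inj, smul_right_inj two_ne_zero, vsub_left_cancel_iff]

theorem map_blossomPoint {W' B' : Type*} [AddCommGroup W'] [Module ℝ W'] [AddTorsor W' B']
    (f : B →ᵃ[ℝ] B') (q x y : B) :
    f (blossomPoint q x y) = blossomPoint (f q) (f x) (f y) := by
  rw [← vsub_left_cancel_iff (p := f q), ← f.linearMap_vsub, blossomPoint_vsub, blossomPoint_vsub]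
  simp only [map_sub, map_smul, f.linearMap_vsub]

/-- The blossom (or polar form) of a quadratic map `δ`: the symmetric biaffine map whose restriction
to the diagonal is `δ`. -/
noncomputable def blossom (δ : A → B) (X Y : A) : B :=
  blossomPoint (δ (midpoint ℝ X Y)) (δ X) (δ Y)

theorem blossom_comp_affineMap {V' A' : Type*} [AddCommGroup V'] [Module ℝ V'] [AddTorsor V' A']
    (δ : A → B) (f : A' →ᵃ[ℝ] A) (X Y : A') :
    blossom (fun P => δ (f P)) X Y = blossom δ (f X) (f Y) := by
  rw [blossom, blossom, f.map_midpoint]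

theorem blossom_affineMap_comp {W' B' : Type*} [AddCommGroup W'] [Module ℝ W'] [AddTorsor W' B']
    (f : B →ᵃ[ℝ] B') (δ : A → B) (X Y : A) :
    blossom (fun P => f (δ P)) X Y = f (blossom δ X Y) :=
  (map_blossomPoint f _ _ _).symm

theorem blossom_comm (δ : A → B) (X Y : A) : blossom δ X Y = blossom δ Y X := by
  rw [blossom, blossom, midpoint_comm, blossomPoint_right_comm]

@[simp]
theorem blossom_self (δ : A → B) (X : A) : blossom δ X X = δ X := by
  rw [blossom, midpoint_self, blossomPoint_self]

theorem map_midpoint_eq_iff_blossom_eq {ι : Type*} {δ : A → B} {p : ι → A} {Q : ι → ι → B} :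
    (∀ i j, δ (midpoint ℝ (p i) (p j)) = Q i j) ↔
      ∀ i j, blossom δ (p i) (p j) = blossomPoint (Q i j) (Q i i) (Q j j) := by
  refine ⟨fun h i j => by simp only [blossom, ← h, midpoint_self], fun h i j => ?_⟩
  have diagonal (i : ι) : δ (p i) = Q i i := by simpa using h i i
  have hij := h i j
  rwa [blossom, diagonal, diagonal, blossomPoint_left_inj] at hij

namespace IsQuadraticMap

theorem comp_affineMap {V' A' : Type*} [AddCommGroup V'] [Module ℝ V'] [AddTorsor V' A']
    {δ : A → B} (hδ : IsQuadraticMap δ) (f : A' →ᵃ[ℝ] A) :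
    IsQuadraticMap fun P => δ (f P) := by
  intro P Q α β hαβ
  simpa only [f.apply_lineMap, f.map_midpoint] using hδ (f P) (f Q) α β hαβ

theorem affineMap_comp {W' B' : Type*} [AddCommGroup W'] [Module ℝ W'] [AddTorsor W' B']
    {δ : A → B} (hδ : IsQuadraticMap δ) (f : B →ᵃ[ℝ] B') :
    IsQuadraticMap fun P => f (δ P) := by
  intro P Q α β hαβ
  simp only [hδ P Q α β hαβ, f.map_vadd, map_add, map_smul, f.linearMap_vsub]

theorem sub {δ ε : A → W} (hδ : IsQuadraticMap δ) (hε : IsQuadraticMap ε) :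
    IsQuadraticMap fun P => δ P - ε P := by
  intro P Q α β hαβ
  simp only [hδ P Q α β hαβ, hε P Q α β hαβ, vsub_eq_sub, vadd_eq_add]
  module

theorem map_smul_add_smul {h : V → W} (hh : IsQuadraticMap h) {α β : ℝ} (hαβ : α + β = 1)
    (x y : V) :
    h (α • x + β • y) = (α * (α - β)) • h x + (β * (β - α)) • h y +
      (4 * α * β) • h ((1 / 2 : ℝ) • (x + y)) := by
  have key := hh x y α β hαβ
  obtain rfl : α = 1 - β := eq_sub_of_add_eq hαβ
  rw [midpoint_eq_smul_add, invOf_eq_inv, inv_eq_one_div, lineMap_apply_module] at key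
  rw [key, vsub_eq_sub, vsub_eq_sub, vadd_eq_add]
  module

theorem map_smul_of_odd {L : V → W} (hL : IsQuadraticMap L) (hodd : ∀ v, L (-v) = -L v)
    (t : ℝ) (v : V) : L (t • v) = t • L v := by
  have map_zero : L 0 = 0 := by
    have neg_self := hodd 0
    rw [neg_zero] at neg_self
    linear_combination (norm := module) (1 / 2 : ℝ) • neg_self
  have key := hL.map_smul_add_smul (α := (1 - t) / 2) (β := (1 + t) / 2) (by ring) (-v) v
  rw [neg_add_cancel, smul_zero, map_zero, hodd,
    show ((1 - t) / 2) • (-v) + ((1 + t) / 2) • v = t • v by module] at key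
  rw [key]
  module

theorem map_add_of_odd {L : V → W} (hL : IsQuadraticMap L) (hodd : ∀ v, L (-v) = -L v)
    (x y : V) : L (x + y) = L x + L y := by
  have map_smul := hL.map_smul_of_odd hodd
  have extrapolation (x y : V) :
      L ((2 : ℝ) • x + y) = (6 : ℝ) • L x - (3 : ℝ) • L y - (4 : ℝ) • L (x - y) := by
    have key := hL.map_smul_add_smul (α := 2) (β := -1) (by norm_num) x (-y)
    rw [neg_smul_neg, one_smul, map_smul, hodd, ← sub_eq_add_neg] at key
    rw [key]
    module
  have interpolation (x y : V) :
      L ((2 : ℝ) • x + y) = (2 / 3 : ℝ) • L x - (1 / 3 : ℝ) • L y + (4 / 3 : ℝ) • L (x + y) := by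
    have key := hL.map_smul_add_smul (α := 2 / 3) (β := 1 / 3) (by norm_num) x y
    rw [show (2 : ℝ) • x + y = (3 : ℝ) • ((2 / 3 : ℝ) • x + (1 / 3 : ℝ) • y) by module,
      map_smul, key, map_smul]
    module
  have hxy := (interpolation x y).symm.trans (extrapolation x y)
  have hyx := (interpolation y x).symm.trans (extrapolation y x)
  rw [add_comm y x, ← neg_sub x y, hodd] at hyx
  linear_combination (norm := module) (3 / 8 : ℝ) • hxy + (3 / 8 : ℝ) • hyx

theorem isLinearMap_of_odd {L : V → W} (hL : IsQuadraticMap L) (hodd : ∀ v, L (-v) = -L v) :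
    IsLinearMap ℝ L :=
  ⟨hL.map_add_of_odd hodd, hL.map_smul_of_odd hodd⟩

theorem isLinearMap_sub_comp_neg {h : V → W} (hh : IsQuadraticMap h) :
    IsLinearMap ℝ fun v => h v - h (-v) :=
  (hh.sub (hh.comp_affineMap (-LinearMap.id : V →ₗ[ℝ] V).toAffineMap)).isLinearMap_of_odd
    fun v => by simp

theorem exists_affineMap_eq_blossom_zero {h : V → W} (hh : IsQuadraticMap h) :
    ∃ f : V →ᵃ[ℝ] W, ∀ v, f v = blossom h 0 v := by
  let L : V →ₗ[ℝ] W := hh.isLinearMap_sub_comp_neg.mk'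
  refine ⟨((1 / 4 : ℝ) • L).toAffineMap + const ℝ V (h 0), fun v => ?_⟩
  have half : h (midpoint ℝ 0 v) =
      (-1 / 8 : ℝ) • h (-v) + (3 / 8 : ℝ) • h v + (3 / 4 : ℝ) • h 0 := by
    have key := hh.map_smul_add_smul (α := 1 / 4) (β := 3 / 4) (by norm_num) (-v) v
    rw [neg_add_cancel, smul_zero,
      show (1 / 4 : ℝ) • (-v) + (3 / 4 : ℝ) • v = midpoint ℝ 0 v by
        rw [midpoint_eq_smul_add, invOf_eq_inv]; module] at key
    rw [key]
    module
  have blossom_eq := blossomPoint_vsub (h (midpoint ℝ 0 v)) (h 0) (h v) 0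
  simp only [vsub_eq_sub, sub_zero] at blossom_eq
  change (1 / 4 : ℝ) • (h v - h (-v)) + h 0 = blossom h 0 v
  rw [blossom, blossom_eq, half]
  module

theorem exists_affineMap_eq_blossom {δ : A → B} (hδ : IsQuadraticMap δ) (X : A) :
    ∃ f : A →ᵃ[ℝ] B, ∀ Y, f Y = blossom δ X Y := by
  let e := AffineEquiv.vaddConst ℝ X
  let e' := AffineEquiv.vaddConst ℝ (δ X)
  obtain ⟨f, hf⟩ := ((hδ.comp_affineMap e.toAffineMap).affineMap_comp
    e'.symm.toAffineMap).exists_affineMap_eq_blossom_zero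
  refine ⟨e'.toAffineMap.comp (f.comp e.symm.toAffineMap), fun Y => ?_⟩
  change e' (f (e.symm Y)) = _
  rw [hf, blossom_affineMap_comp, blossom_comp_affineMap]
  simp [e, e']

theorem map_affineCombination {ι : Type*} {δ : A → B} (hδ : IsQuadraticMap δ) {s : Finset ι}
    {w : ι → ℝ} (hw : ∑ i ∈ s, w i = 1) (p : ι → A) :
    δ (s.affineCombination ℝ p w) = (s ×ˢ s).affineCombination ℝ
      (fun ij => blossom δ (p ij.1) (p ij.2)) (fun ij => w ij.1 * w ij.2) := by
  have blossom_right (X : A) : blossom δ X (s.affineCombination ℝ p w) =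
      s.affineCombination ℝ (fun i => blossom δ X (p i)) w := by
    obtain ⟨f, hf⟩ := hδ.exists_affineMap_eq_blossom X
    simpa only [hf, Function.comp_def] using s.map_affineCombination p w hw f
  rw [← blossom_self δ, blossom_right]
  simp only [blossom_comm δ (s.affineCombination ℝ p w), blossom_right]
  exact affineCombination_affineCombination_eq_product hw hw _

theorem eq_of_blossom_eq {ι : Type*} {δ ε : A → B} (hδ : IsQuadraticMap δ)
    (hε : IsQuadraticMap ε) {p : ι → A} (hp : affineSpan ℝ (Set.range p) = ⊤)
    (h : ∀ i j, blossom δ (p i) (p j) = blossom ε (p i) (p j)) : δ = ε := by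
  funext P
  obtain ⟨s, w, hw, rfl⟩ := eq_affineCombination_of_mem_affineSpan
    (hp ▸ AffineSubspace.mem_top ℝ V P : P ∈ affineSpan ℝ (Set.range p))
  simp only [hδ.map_affineCombination hw, hε.map_affineCombination hw, h]

end IsQuadraticMap

theorem isQuadraticMap_diagonal (T : A →ᵃ[ℝ] A →ᵃ[ℝ] B) : IsQuadraticMap fun P => T P P := by
  intro P Q α β hαβ
  obtain rfl : α = 1 - β := eq_sub_of_add_eq hαβ
  rw [← vsub_left_cancel_iff (p := T P P), vadd_vsub_assoc,
    ← vsub_sub_vsub_cancel_right (T P P) _ (T P P),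
    ← vsub_sub_vsub_cancel_right (T Q Q) _ (T P P)]
  simp only [midpoint, invOf_eq_inv, AffineMap.apply_lineMap, lineMap_apply',
    AffineMap.lineMap_vsub, lineMap_apply_module]
  module

theorem blossom_diagonal (T : A →ᵃ[ℝ] A →ᵃ[ℝ] B) (X Y : A) :
    blossom (fun P => T P P) X Y = midpoint ℝ (T X Y) (T Y X) := by
  rw [← vsub_left_cancel_iff (p := T X X), blossom, blossomPoint_vsub]
  simp only [midpoint, invOf_eq_inv, AffineMap.apply_lineMap, lineMap_apply',
    AffineMap.lineMap_vsub, lineMap_apply_module]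
  module

theorem exists_isQuadraticMap_blossom_eq {ι : Type*} (b : AffineBasis ι ℝ A) {D : ι → ι → B}
    (hD : ∀ i j, D i j = D j i) :
    ∃ δ : A → B, IsQuadraticMap δ ∧ ∀ i j, blossom δ (b i) (b j) = D i j := by
  choose row hrow using fun i => exists_affineMap_apply_basis_eq b (D i)
  obtain ⟨T, hT⟩ := exists_affineMap_apply_basis_eq b row
  refine ⟨fun P => T P P, isQuadraticMap_diagonal T, fun i j => ?_⟩
  rw [blossom_diagonal, hT, hT, hrow, hrow, hD j i, midpoint_self]

theorem stmt0_general {ι : Type*} (b : AffineBasis ι ℝ A) (Q : ι → ι → B)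
    (hQ : ∀ i j, Q i j = Q j i) :
    (∃! δ : A → B, IsQuadraticMap δ ∧ ∀ i j, δ (midpoint ℝ (b i) (b j)) = Q i j) ∧
    (∀ δ : A → B, IsQuadraticMap δ → (∀ i j, δ (midpoint ℝ (b i) (b j)) = Q i j) →
        ∀ (s : Finset ι) (w : ι → ℝ), ∑ i ∈ s, w i = 1 →
          δ (s.affineCombination ℝ b w) = (s ×ˢ s).affineCombination ℝ
            (fun ij => blossomPoint (Q ij.1 ij.2) (Q ij.1 ij.1) (Q ij.2 ij.2))
            (fun ij => w ij.1 * w ij.2)) := by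
  simp only [map_midpoint_eq_iff_blossom_eq (p := b) (Q := Q)]
  refine ⟨?_, fun δ hδ h s w hw => by simp only [hδ.map_affineCombination hw, h]⟩
  obtain ⟨δ, hδ, h⟩ := exists_isQuadraticMap_blossom_eq b
    (D := fun i j => blossomPoint (Q i j) (Q i i) (Q j j))
    fun i j => by rw [hQ, blossomPoint_right_comm]
  exact ⟨δ, ⟨hδ, h⟩, fun ε ⟨hε, hε'⟩ =>
    hε.eq_of_blossom_eq hδ b.tot fun i j => (hε' i j).trans (h i j).symm⟩

end Blossom

/-- Let `A` be a finite-dimensional real affine space with affine basis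
`(R_0, …, R_n)` and `B` a real affine space.  Given points `Q i j ∈ B` with
`Q i j = Q j i`, there is a unique quadratic map `δ : A → B` with
`δ(midpoint (R i) (R j)) = Q i j`; moreover it is given by
`δ(P) = Σ_{i,j} p_i p_j • Δ_{i j}` where `p` are the barycentric coordinates of `P` and
`Δ_{i j} = 2•Q_{i j} − (1/2)•Q_{i i} − (1/2)•Q_{j j}` (an affine combination in `B`). -/
theorem stmt0 {V A W B : Type*} [AddCommGroup V] [Module ℝ V] [AddTorsor V A]
    [FiniteDimensional ℝ V] [AddCommGroup W] [Module ℝ W] [AddTorsor W B]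
    {n : ℕ} (b : AffineBasis (Fin (n + 1)) ℝ A)
    (Q : Fin (n + 1) → Fin (n + 1) → B) (hQ : ∀ i j, Q i j = Q j i) :
    (∃! δ : A → B, IsQuadraticMap δ ∧
        ∀ i j, δ (midpoint ℝ (b i) (b j)) = Q i j) ∧
    (∀ δ : A → B, IsQuadraticMap δ →
        (∀ i j, δ (midpoint ℝ (b i) (b j)) = Q i j) →
        ∀ P : A,
          δ P = Finset.univ.affineCombination ℝ
            (fun ij : Fin (n + 1) × Fin (n + 1) =>
              Finset.univ.affineCombination ℝ
                ![Q ij.1 ij.2, Q ij.1 ij.1, Q ij.2 ij.2]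
                ![(2 : ℝ), -(1/2 : ℝ), -(1/2 : ℝ)])
            (fun ij : Fin (n + 1) × Fin (n + 1) => b.coord ij.1 P * b.coord ij.2 P)) := by
  refine (stmt0_general b Q hQ).imp_right fun formula δ hδ hm P => ?_
  simpa only [b.affineCombination_coord_eq_self, univ_product_univ, blossomPoint] using
    formula δ hδ hm univ (fun i => b.coord i P) (b.sum_coord_apply_eq_one P)
end

section
/- Let A be a finite-dimensional real affine space. The linear map that sends a symmetric bilinear form ĝ on the dual space of the space of affine functions A → ℝ (the linear hull of A) to the function P ↦ (1/2)·ĝ(z_P, z_P), where z_P is the evaluation functional at P, is injective, and its image is exactly the subspace of quadratic functions A → ℝ. Moreover, if ĝ corresponds in this way to the quadratic function δ, then ĝ(z_P, z_Q) = 4δ(midpoint(P,Q)) − δ(P) − δ(Q) for all P, Q ∈ A. -/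
/-!
The evaluations `z_P` depend affinely on `P`, so polarizing a symmetric form at the midpoint of
`z_P` and `z_Q` gives the formula for its value at `(z_P, z_Q)`. As they separate affine functions,
they span the linear hull when `A` is finite-dimensional, and injectivity follows.

Every affine map from `A` to a vector space factors linearly through the linear hull, and symmetric
bilinear forms correspond to quadratic forms `q`, so the image is determined by writing a quadratic
function as `P ↦ q z_P`. A quadratic function on a vector space is the sum of a constant, an odd
part and an even part vanishing at `0`, again quadratic; the last two are homogeneous of degree one
and two. Computing `f (u + 2v) = f (2(v + u/2))` both by interpolation along a line and by
homogeneity shows that the odd part is additive and that the even part satisfies the parallelogram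
law, hence is a quadratic form (Jordan–von Neumann).
-/

/-- A function `δ : A → ℝ` on a real affine space is *quadratic* if for all points
`P, Q` and all `α, β ∈ ℝ` with `α + β = 1`,
`δ(α·P + β·Q) = α(α−β)·δ(P) + β(β−α)·δ(Q) + 4αβ·δ(midpoint(P,Q))`. -/
def IsQuadraticFn {V A : Type*} [AddCommGroup V] [Module ℝ V] [AddTorsor V A]
    (δ : A → ℝ) : Prop :=
  ∀ (P Q : A) (α β : ℝ), α + β = 1 →
    δ (AffineMap.lineMap P Q β) =
      α * (α - β) * δ P + β * (β - α) * δ Q + 4 * α * β * δ (midpoint ℝ P Q)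

/-- The evaluation functional `z_P` at a point `P`, an element of the linear hull
(the dual of the space of affine functions `A → ℝ`). -/
def evalAff {V A : Type*} [AddCommGroup V] [Module ℝ V] [AddTorsor V A] (P : A) :
    Module.Dual ℝ (A →ᵃ[ℝ] ℝ) where
  toFun f := f P
  map_add' f g := by simp
  map_smul' c f := by simp

open QuadraticMap (polar polar_comm polarBilin)

lemma polar_add_left_of_parallelogram {M N : Type*} [AddCommGroup M] [AddCommGroup N]
    [IsAddTorsionFree N] {f : M → N} (hf : ∀ u v, f (u + v) + f (u - v) = 2 • f u + 2 • f v)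
    (u v w : M) : polar f (u + v) w = polar f u w + polar f v w := by
  have h₁ := hf (u + v) w
  have h₂ := hf (u + w) v
  have h₃ := hf u (v - w)
  have h₄ := hf v w
  rw [show u + w + v = u + v + w by abel, show u + w - v = u - (v - w) by abel] at h₂
  rw [show u + (v - w) = u + v - w by abel] at h₃
  refine nsmul_right_injective two_ne_zero ?_
  simp only [polar]
  linear_combination (norm := module) h₁ + h₂ - h₃ - (2 : ℤ) • h₄

lemma bilinForm_apply_eq_midpoint {R M : Type*} [CommRing R] [Invertible (2 : R)] [AddCommGroup M]
    [Module R M] {g : LinearMap.BilinForm R M} (hg : ∀ x y, g x y = g y x) (x y : M) :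
    g x y = 2 * g (midpoint R x y) (midpoint R x y) - ⅟2 * g x x - ⅟2 * g y y := by
  simp only [midpoint_eq_smul_add, map_add, map_smul, LinearMap.add_apply, LinearMap.smul_apply,
    smul_eq_mul, hg y x]
  linear_combination
    -(⅟2 * g x x + ⅟2 * g y y + (2 * ⅟2 + 1) * g x y) * invOf_mul_self (2 : R)

section LinearHull

variable {V A W : Type*} [AddCommGroup V] [Module ℝ V] [AddTorsor V A]
  [AddCommGroup W] [Module ℝ W]

variable (A) in
/-- The canonical affine embedding `P ↦ z_P` of an affine space into its linear hull. -/
def evalAffineMap : A →ᵃ[ℝ] Module.Dual ℝ (A →ᵃ[ℝ] ℝ) where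
  toFun := evalAff
  linear := LinearMap.mk₂ ℝ (fun v f => f.linear v) (by simp) (by simp) (by simp) (by simp)
  map_vadd' P v := by
    ext f
    exact f.map_vadd P v

lemma evalAff_apply (P : A) (f : A →ᵃ[ℝ] ℝ) : evalAff P f = f P := rfl

lemma evalAff_midpoint (P Q : A) :
    evalAff (midpoint ℝ P Q) = midpoint ℝ (evalAff P) (evalAff Q) :=
  (evalAffineMap A).map_midpoint P Q

lemma span_range_evalAff [FiniteDimensional ℝ V] :
    Submodule.span ℝ (Set.range (evalAff : A → Module.Dual ℝ (A →ᵃ[ℝ] ℝ))) = ⊤ := by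
  set Z := Submodule.span ℝ (Set.range (evalAff : A → Module.Dual ℝ (A →ᵃ[ℝ] ℝ)))
  have hZ : Z.dualCoannihilator = ⊥ := by
    refine (Submodule.eq_bot_iff _).2 fun f hf => AffineMap.ext fun P => ?_
    exact (Submodule.mem_dualCoannihilator f).1 hf _ (Submodule.subset_span ⟨P, rfl⟩)
  rw [← Subspace.dualCoannihilator_dualAnnihilator_eq (W := Z), hZ, Submodule.dualAnnihilator_bot]

lemma exists_linearMap_apply_evalAff_eq (h : A →ᵃ[ℝ] W) :
    ∃ L : Module.Dual ℝ (A →ᵃ[ℝ] ℝ) →ₗ[ℝ] W, ∀ P, L (evalAff P) = h P := by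
  obtain ⟨O⟩ : Nonempty A := inferInstance
  -- `ι` is not onto for infinite-dimensional `V`, hence a left inverse and not an inverse.
  let ι : ℝ × V →ₗ[ℝ] Module.Dual ℝ (A →ᵃ[ℝ] ℝ) :=
    (LinearMap.toSpanSingleton ℝ _ (evalAff O)).coprod (evalAffineMap A).linear
  have hι : ∀ t v f, ι (t, v) f = t * f O + f.linear v := fun t v f => rfl
  have hker : LinearMap.ker ι = ⊥ := by
    refine LinearMap.ker_eq_bot'.2 fun ⟨t, v⟩ htv => ?_
    have ht : t = 0 := by simpa [hι] using DFunLike.congr_fun htv (AffineMap.const ℝ A 1)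
    have hv : v = 0 := (Module.forall_dual_apply_eq_zero_iff ℝ v).1 fun ξ => by
      simpa [hι] using DFunLike.congr_fun htv
        (ξ.toAffineMap.comp (AffineEquiv.vaddConst ℝ O).symm.toAffineMap)
    rw [ht, hv, Prod.mk_zero_zero]
  obtain ⟨r, hr⟩ := ι.exists_leftInverse_of_injective hker
  refine ⟨(LinearMap.toSpanSingleton ℝ W (h O)).coprod h.linear ∘ₗ r, fun P => ?_⟩
  have hP : evalAff P = ι (1, P -ᵥ O) := by
    ext f
    rw [hι, one_mul, AffineMap.linearMap_vsub]
    exact (add_sub_cancel (f O) (f P)).symm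
  rw [hP, LinearMap.comp_apply, ← LinearMap.comp_apply r, hr]
  simp

lemma bilinForm_ext_of_evalAff_self [FiniteDimensional ℝ V]
    {g₁ g₂ : LinearMap.BilinForm ℝ (Module.Dual ℝ (A →ᵃ[ℝ] ℝ))}
    (hg₁ : ∀ x y, g₁ x y = g₁ y x) (hg₂ : ∀ x y, g₂ x y = g₂ y x)
    (h : ∀ P : A, g₁ (evalAff P) (evalAff P) = g₂ (evalAff P) (evalAff P)) : g₁ = g₂ := by
  refine LinearMap.ext_on_range span_range_evalAff fun P => ?_
  refine LinearMap.ext_on_range span_range_evalAff fun Q => ?_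
  rw [bilinForm_apply_eq_midpoint hg₁, bilinForm_apply_eq_midpoint hg₂, ← evalAff_midpoint, h, h, h]

end LinearHull

section QuadraticFunctions

variable {V A V' A' : Type*} [AddCommGroup V] [Module ℝ V] [AddTorsor V A]
  [AddCommGroup V'] [Module ℝ V'] [AddTorsor V' A']

variable (A) in
/-- The subspace of quadratic functions on the affine space `A`. -/
def quadraticFns : Submodule ℝ (A → ℝ) where
  carrier := {δ | IsQuadraticFn δ}
  zero_mem' P Q α β _ := by simp
  add_mem' {δ ε} hδ hε P Q α β h := by
    simp only [Pi.add_apply, hδ P Q α β h, hε P Q α β h]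
    ring
  smul_mem' c δ hδ P Q α β h := by
    simp only [Pi.smul_apply, smul_eq_mul, hδ P Q α β h]
    ring

lemma isQuadraticFn_const (c : ℝ) : IsQuadraticFn (fun _ : A => c) := fun P Q α β h => by
  linear_combination -c * (α + β + 1) * h

lemma isQuadraticFn_quadraticForm (q : QuadraticForm ℝ V) : IsQuadraticFn q := by
  intro P Q α β h
  obtain rfl : α = 1 - β := by linarith
  have hpolar : ∀ a b : ℝ, q (a • P + b • Q) = a ^ 2 * q P + b ^ 2 * q Q + a * b * polar q P Q := by
    intro a b
    rw [QuadraticMap.map_add q, q.map_smul, q.map_smul, q.polar_smul_left, q.polar_smul_right]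
    simp only [smul_eq_mul]
    ring
  rw [AffineMap.lineMap_apply_module, midpoint_eq_smul_add, smul_add, hpolar, hpolar, invOf_eq_inv]
  ring

namespace IsQuadraticFn

lemma comp_affineMap {δ : A' → ℝ} (hδ : IsQuadraticFn δ) (h : A →ᵃ[ℝ] A') :
    IsQuadraticFn (δ ∘ h) := fun P Q α β hαβ => by
  simp only [Function.comp_apply, AffineMap.apply_lineMap, AffineMap.map_midpoint,
    hδ (h P) (h Q) α β hαβ]

lemma map_smul_vadd {δ : A → ℝ} (hδ : IsQuadraticFn δ) (t : ℝ) (v : V) (P : A) :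
    δ (t • v +ᵥ P) =
      t * (t - 1) / 2 * δ (-v +ᵥ P) + (1 - t ^ 2) * δ P + t * (t + 1) / 2 * δ (v +ᵥ P) := by
  have hmid : midpoint ℝ (-v +ᵥ P) (v +ᵥ P) = P := by
    rw [← midpoint_vadd_midpoint, midpoint_neg_self, midpoint_self, zero_vadd]
  have hline : AffineMap.lineMap (-v +ᵥ P) (v +ᵥ P) ((1 + t) / 2) = t • v +ᵥ P := by
    rw [AffineMap.lineMap_apply, vadd_vsub_vadd_cancel_right, vadd_vadd]
    congr 1
    module
  rw [← hline, hδ _ _ ((1 - t) / 2) ((1 + t) / 2) (by ring), hmid]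
  ring

variable {f : V → ℝ}

lemma map_add_smul (hf : IsQuadraticFn f) (u v : V) (t : ℝ) :
    f (u + t • v) =
      t * (t - 1) / 2 * f (u - v) + (1 - t ^ 2) * f u + t * (t + 1) / 2 * f (u + v) := by
  simpa only [vadd_eq_add, add_comm _ u, ← sub_eq_add_neg] using hf.map_smul_vadd t v u

lemma map_smul_of_odd (hf : IsQuadraticFn f) (hodd : Function.Odd f) (t : ℝ) (v : V) :
    f (t • v) = t * f v := by
  have h := hf.map_add_smul 0 v t
  rw [zero_add, zero_sub, zero_add, hodd v, hodd.map_zero] at h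
  linear_combination h

lemma map_smul_of_even (hf : IsQuadraticFn f) (heven : Function.Even f) (h0 : f 0 = 0) (t : ℝ)
    (v : V) : f (t • v) = t ^ 2 * f v := by
  have h := hf.map_add_smul 0 v t
  rw [zero_add, zero_sub, zero_add, heven v, h0] at h
  linear_combination h

lemma map_add_of_odd (hf : IsQuadraticFn f) (hodd : Function.Odd f) (u v : V) :
    f (u + v) = f u + f v := by
  have key : ∀ u v, 3 * f (u + v) + f (u - v) = 4 * f u + 2 * f v := fun u v => by
    have hline_u := hf.map_add_smul u v 2
    have hline_v := hf.map_add_smul v u 2⁻¹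
    have hhom := hf.map_smul_of_odd hodd 2 (v + (2⁻¹ : ℝ) • u)
    rw [show (2 : ℝ) • (v + (2⁻¹ : ℝ) • u) = u + (2 : ℝ) • v by module] at hhom
    rw [add_comm v u, ← neg_sub u v, hodd] at hline_v
    linarith
  have h := key u (-v)
  rw [← sub_eq_add_neg, sub_neg_eq_add, hodd v] at h
  linarith [key u v]

lemma parallelogram_of_even (hf : IsQuadraticFn f) (heven : Function.Even f) (h0 : f 0 = 0)
    (u v : V) : f (u + v) + f (u - v) = 2 * f u + 2 * f v := by
  have hline_u := hf.map_add_smul u v 2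
  have hline_v := hf.map_add_smul v u 2⁻¹
  have hhom := hf.map_smul_of_even heven h0 2 (v + (2⁻¹ : ℝ) • u)
  rw [show (2 : ℝ) • (v + (2⁻¹ : ℝ) • u) = u + (2 : ℝ) • v by module] at hhom
  rw [add_comm v u, ← neg_sub u v, heven] at hline_v
  linarith

lemma polar_smul_left_of_even (hf : IsQuadraticFn f) (heven : Function.Even f) (h0 : f 0 = 0)
    (t : ℝ) (u v : V) : polar f (t • u) v = t * polar f u v := by
  have h := hf.map_add_smul v u t
  rw [← neg_sub u v, heven, add_comm v, add_comm v] at h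
  simp only [polar, h, hf.map_smul_of_even heven h0]
  linear_combination t * (t - 1) / 2 * hf.parallelogram_of_even heven h0 u v

lemma exists_linearMap_of_odd (hf : IsQuadraticFn f) (hodd : Function.Odd f) :
    ∃ l : V →ₗ[ℝ] ℝ, ∀ v, f v = l v :=
  ⟨{ toFun := f, map_add' := hf.map_add_of_odd hodd, map_smul' := hf.map_smul_of_odd hodd },
    fun _ => rfl⟩

lemma exists_quadraticForm_of_even (hf : IsQuadraticFn f) (heven : Function.Even f)
    (h0 : f 0 = 0) : ∃ q : QuadraticForm ℝ V, ∀ v, f v = q v :=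
  ⟨QuadraticMap.ofPolar f
    (fun t v => by rw [hf.map_smul_of_even heven h0, sq, smul_eq_mul])
    (polar_add_left_of_parallelogram fun u v => by
      simpa only [nsmul_eq_mul, Nat.cast_ofNat] using hf.parallelogram_of_even heven h0 u v)
    (hf.polar_smul_left_of_even heven h0), fun _ => rfl⟩

lemma exists_linearMap_add_quadraticForm (hf : IsQuadraticFn f) :
    ∃ (l : V →ₗ[ℝ] ℝ) (q : QuadraticForm ℝ V), ∀ v, f v = f 0 + l v + q v := by
  have hneg : IsQuadraticFn (f ∘ Neg.neg) := hf.comp_affineMap (-LinearMap.id).toAffineMap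
  have hoddPart : (2⁻¹ : ℝ) • (f - f ∘ Neg.neg) ∈ quadraticFns V :=
    Submodule.smul_mem _ _ (sub_mem hf hneg)
  have hevenPart : (2⁻¹ : ℝ) • (f + f ∘ Neg.neg) - (fun _ => f 0) ∈ quadraticFns V :=
    sub_mem (Submodule.smul_mem _ _ (add_mem hf hneg)) (isQuadraticFn_const (f 0))
  obtain ⟨l, hl⟩ := exists_linearMap_of_odd hoddPart fun v => by simp; ring
  obtain ⟨q, hq⟩ :=
    exists_quadraticForm_of_even hevenPart (fun v => by simp [add_comm]) (by simp; ring)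
  refine ⟨l, q, fun v => ?_⟩
  rw [← hl, ← hq]
  simp only [Pi.smul_apply, Pi.sub_apply, Pi.add_apply, Function.comp_apply, smul_eq_mul]
  ring

lemma exists_affineMap_add_quadraticForm {δ : A → ℝ} (hδ : IsQuadraticFn δ) (O : A) :
    ∃ (a : A →ᵃ[ℝ] ℝ) (q : QuadraticForm ℝ V), ∀ P, δ P = a P + q (P -ᵥ O) := by
  let e := AffineEquiv.vaddConst ℝ O
  obtain ⟨l, q, h⟩ := (hδ.comp_affineMap e.toAffineMap).exists_linearMap_add_quadraticForm
  refine ⟨AffineMap.const ℝ A (δ O) + l.toAffineMap.comp e.symm.toAffineMap, q, fun P => ?_⟩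
  simpa [e] using h (P -ᵥ O)

end IsQuadraticFn

theorem isQuadraticFn_iff_exists_quadraticForm {δ : A → ℝ} :
    IsQuadraticFn δ ↔
      ∃ q : QuadraticForm ℝ (Module.Dual ℝ (A →ᵃ[ℝ] ℝ)), ∀ P, δ P = q (evalAff P) := by
  refine ⟨fun hδ => ?_, fun ⟨q, hq⟩ => ?_⟩
  · obtain ⟨O⟩ : Nonempty A := inferInstance
    obtain ⟨a, q, hδ⟩ := hδ.exists_affineMap_add_quadraticForm O
    obtain ⟨L, hL⟩ := exists_linearMap_apply_evalAff_eq (AffineEquiv.vaddConst ℝ O).symm.toAffineMap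
    -- Evaluation at the constant function `1` is `1` on every `z_P` and homogenizes `a`.
    let ev := Module.Dual.eval ℝ (A →ᵃ[ℝ] ℝ)
    refine ⟨QuadraticMap.linMulLin (ev (AffineMap.const ℝ A 1)) (ev a) + q.comp L, fun P => ?_⟩
    simp [hδ, hL, ev, evalAff_apply]
  · obtain rfl : δ = q ∘ evalAffineMap A := funext hq
    exact (isQuadraticFn_quadraticForm q).comp_affineMap _

theorem isQuadraticFn_iff_exists_bilinForm {δ : A → ℝ} :
    IsQuadraticFn δ ↔ ∃ g : LinearMap.BilinForm ℝ (Module.Dual ℝ (A →ᵃ[ℝ] ℝ)),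
      (∀ x y, g x y = g y x) ∧ ∀ P : A, δ P = (1/2 : ℝ) * g (evalAff P) (evalAff P) := by
  rw [isQuadraticFn_iff_exists_quadraticForm]
  refine ⟨fun ⟨q, hq⟩ => ⟨polarBilin q, polar_comm q, fun P => ?_⟩, fun ⟨g, _, hg⟩ => ?_⟩
  · rw [hq, QuadraticMap.polarBilin_apply_apply, q.polar_self, nsmul_eq_mul]
    ring
  · exact ⟨(1/2 : ℝ) • g.toQuadraticMap, hg⟩

end QuadraticFunctions

/-- The linear map sending a symmetric bilinear form `ĝ` on the
linear hull of `A` to the function `P ↦ (1/2)·ĝ(z_P, z_P)` is injective, its image is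
exactly the set of quadratic functions on `A`, and if `ĝ` corresponds to `δ` then
`ĝ(z_P, z_Q) = 4δ(midpoint(P,Q)) − δ(P) − δ(Q)`. -/
theorem stmt3 {V A : Type*} [AddCommGroup V] [Module ℝ V] [AddTorsor V A]
    [FiniteDimensional ℝ V] :
    (∀ g₁ g₂ : LinearMap.BilinForm ℝ (Module.Dual ℝ (A →ᵃ[ℝ] ℝ)),
        (∀ x y, g₁ x y = g₁ y x) → (∀ x y, g₂ x y = g₂ y x) →
        (∀ P : A, g₁ (evalAff P) (evalAff P) = g₂ (evalAff P) (evalAff P)) →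
        g₁ = g₂) ∧
    (∀ δ : A → ℝ, IsQuadraticFn δ ↔
        ∃ g : LinearMap.BilinForm ℝ (Module.Dual ℝ (A →ᵃ[ℝ] ℝ)),
          (∀ x y, g x y = g y x) ∧
          ∀ P : A, δ P = (1/2 : ℝ) * g (evalAff P) (evalAff P)) ∧
    (∀ (g : LinearMap.BilinForm ℝ (Module.Dual ℝ (A →ᵃ[ℝ] ℝ))) (δ : A → ℝ),
        (∀ x y, g x y = g y x) →
        (∀ P : A, δ P = (1/2 : ℝ) * g (evalAff P) (evalAff P)) →
        ∀ P Q : A, g (evalAff P) (evalAff Q) =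
          4 * δ (midpoint ℝ P Q) - δ P - δ Q) := by
  refine ⟨fun g₁ g₂ => bilinForm_ext_of_evalAff_self, fun δ => isQuadraticFn_iff_exists_bilinForm,
    fun g δ hg hδ P Q => ?_⟩
  rw [bilinForm_apply_eq_midpoint hg, ← evalAff_midpoint, hδ, hδ, hδ, invOf_eq_inv]
  ring
end

section
/- Let A be a finite-dimensional real affine space over V with dim V = n, let g be a symmetric bilinear form on V, and let (R_0, …, R_n) be an affine basis of A. Set D_{ij} = g(R_j − R_i, R_j − R_i) for 0 ≤ i, j ≤ n. Then g is nondegenerate if and only if the (n+2)×(n+2) symmetric matrix obtained by bordering D with a row of ones, a column of ones, and a zero in the corner (i.e. the Cayley–Menger matrix M with M_{ij} = D_{ij} for i, j ≤ n, M_{i,n+1} = M_{n+1,i} = 1 for i ≤ n, and M_{n+1,n+1} = 0) is invertible. -/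
/-!
Adding a multiple of the border row (or column) of ones to the other rows (or columns) does not
change a determinant. With `u j = R_j - R_i` for a base point `R_i`, the expansion
`Q (u k - u j) = Q (u j) + Q (u k) - polar Q (u j) (u k)` therefore replaces the squared distances
in the Cayley–Menger matrix by the entries `-polar Q (u j) (u k)`. Since `u i = 0`, row and column
`i` then vanish off the border; swapping row `i` with the border row makes the matrix block
triangular, and its determinant is, up to sign, the Gram determinant of `polar Q` at the vectors
`u j`, `j ≠ i`. These form a basis of `V`, so this determinant detects nondegeneracy. For a
symmetric bilinear form `g` and `Q x = g x x`, the polar form is `2 g`.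
-/

open Matrix QuadraticMap

section BorderOnes

variable {ι R : Type*}

/-- The bordered matrix `[A, 1; 1ᵀ, 0]`, the shape common to the Cayley–Menger matrix and its
reductions. The border is the summand `Unit` of the index type. -/
def borderOnes [Zero R] [One R] (A : Matrix ι ι R) : Matrix (ι ⊕ Unit) (ι ⊕ Unit) R :=
  fromBlocks A (replicateCol Unit 1) (replicateRow Unit 1) 0

theorem of_dite_eq_submatrix_borderOnes [Zero R] [One R] {m : ℕ}
    (A : Matrix (Fin m) (Fin m) R) :
    (of fun i j : Fin (m + 1) =>
      if hi : (i : ℕ) < m then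
        if hj : (j : ℕ) < m then A ⟨i, hi⟩ ⟨j, hj⟩ else 1
      else if (j : ℕ) < m then 1 else 0) =
      (borderOnes A).submatrix (finSuccEquivLast.trans (Equiv.optionEquivSumPUnit (Fin m)))
        (finSuccEquivLast.trans (Equiv.optionEquivSumPUnit (Fin m))) := by
  ext i j
  cases i using Fin.lastCases <;> cases j using Fin.lastCases <;> simp [borderOnes]

variable [CommRing R] [Fintype ι] [DecidableEq ι]

theorem det_borderOnes_add (A : Matrix ι ι R) (r s : ι → R) :
    (borderOnes (of fun i j => A i j + r i + s j)).det = (borderOnes A).det := by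
  have factorization : borderOnes (of fun i j => A i j + r i + s j) =
      fromBlocks 1 (replicateCol Unit r) 0 1 * borderOnes A *
        fromBlocks 1 0 (replicateRow Unit s) 1 := by
    simp only [borderOnes, fromBlocks_multiply]
    ext (i | i) (j | j) <;> simp [mul_apply]
  rw [factorization, det_mul, det_mul, det_fromBlocks_zero₂₁, det_fromBlocks_zero₁₂]
  simp only [det_one, mul_one, one_mul]

theorem det_eq_mul_det_of_col_eq_zero (A : Matrix ι ι R) (i : ι) (col : ∀ j ≠ i, A j i = 0) :
    A.det = A i i * (of fun j k : {j // j ≠ i} => A j k).det := by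
  have block_triangular : ∀ j, j ≠ i → ∀ k, ¬k ≠ i → A j k = 0 := by
    rintro j hj k hk
    rw [not_not.mp hk, col j hj]
  have : Subsingleton {j // ¬j ≠ i} :=
    ⟨fun j k => Subtype.ext ((not_not.mp j.2).trans (not_not.mp k.2).symm)⟩
  rw [twoBlockTriangular_det' A (· ≠ i) block_triangular,
    det_eq_elem_of_subsingleton (A.toSquareBlockProp fun j => ¬j ≠ i) ⟨i, not_not.mpr rfl⟩,
    mul_comm]
  rfl

theorem det_borderOnes_of_row_col_eq_zero (A : Matrix ι ι R) (i : ι)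
    (row : ∀ j, A i j = 0) (col : ∀ j, A j i = 0) :
    (borderOnes A).det = -(of fun j k : {j // j ≠ i} => A j k).det := by
  have swap_rows : (borderOnes A).submatrix (Equiv.swap (Sum.inl i) (Sum.inr ())) id =
      fromBlocks (A.updateRow i 1) (replicateCol Unit (Function.update 1 i 0)) 0 1 := by
    ext (j | j) (k | k)
    · by_cases hj : j = i <;> simp [borderOnes, Equiv.swap_apply_def, hj]
    · by_cases hj : j = i <;> simp [borderOnes, Equiv.swap_apply_def, hj]
    · simp [borderOnes, row]
    · simp [borderOnes]
  have det_updateRow_one : (A.updateRow i 1).det = (of fun j k : {j // j ≠ i} => A j k).det := by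
    have col_updateRow : ∀ j ≠ i, A.updateRow i 1 j i = 0 := fun j hj => by
      rw [updateRow_ne hj, col]
    rw [det_eq_mul_det_of_col_eq_zero _ i col_updateRow, updateRow_self, Pi.one_apply, one_mul]
    congr 1
    ext j k
    rw [of_apply, of_apply, updateRow_ne j.2]
  have det_swap := det_permute (Equiv.swap (Sum.inl i) (Sum.inr ())) (borderOnes A)
  rw [swap_rows, det_fromBlocks_zero₂₁, det_one, mul_one, det_updateRow_one,
    Equiv.Perm.sign_swap Sum.inl_ne_inr] at det_swap
  simp [det_swap]

end BorderOnes

theorem quadraticMap_sub_eq {R M N : Type*} [CommRing R] [AddCommGroup M] [Module R M]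
    [AddCommGroup N] [Module R N] (Q : QuadraticMap R M N) (x y : M) :
    Q (y - x) = -polar Q x y + Q x + Q y := by
  have h := QuadraticMap.map_add Q (-x) y
  rw [polar_neg_left, QuadraticMap.map_neg, neg_add_eq_sub] at h
  rw [h]
  abel

section CayleyMenger

variable {ι R V P : Type*} [CommRing R] [AddCommGroup V] [Module R V] [AddTorsor V P]

/-- The Cayley–Menger matrix of a family of points, a quadratic form `Q` playing the role of the
squared length. -/
def cayleyMenger (Q : QuadraticForm R V) (p : ι → P) : Matrix (ι ⊕ Unit) (ι ⊕ Unit) R :=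
  borderOnes (of fun i j => Q (p j -ᵥ p i))

theorem det_cayleyMenger [Fintype ι] [DecidableEq ι] (Q : QuadraticForm R V) (p : ι → P) (i : ι) :
    (cayleyMenger Q p).det = (-1) ^ Fintype.card ι *
      (of fun j k : {j // j ≠ i} => polar Q (p j -ᵥ p i) (p k -ᵥ p i)).det := by
  have expansion : (of fun j k => Q (p k -ᵥ p j) : Matrix ι ι R) =
      of fun j k => (-of fun j k => polar Q (p j -ᵥ p i) (p k -ᵥ p i)) j k +
        Q (p j -ᵥ p i) + Q (p k -ᵥ p i) := by
    ext j k
    rw [of_apply, ← vsub_sub_vsub_cancel_right (p k) (p j) (p i), quadraticMap_sub_eq]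
    rfl
  have card : Fintype.card ι = Fintype.card {j // j ≠ i} + 1 := by
    have card_pos := Fintype.card_pos_iff.mpr ⟨i⟩
    rw [Fintype.card_subtype_compl, Fintype.card_subtype_eq]
    omega
  rw [cayleyMenger, expansion, det_borderOnes_add, det_borderOnes_of_row_col_eq_zero _ i
    (fun j => by simp) (fun j => by simp), card, pow_succ, mul_neg_one, neg_mul, ← det_neg]
  rfl

end CayleyMenger

theorem nondegenerate_polarBilin_toQuadraticMap_iff_separatingLeft {R V : Type*}
    [CommRing R] [AddCommGroup V] [Module R V] (two_regular : IsLeftRegular (2 : R))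
    {g : LinearMap.BilinForm R V} (hg : g.IsSymm) :
    g.toQuadraticMap.polarBilin.Nondegenerate ↔ g.SeparatingLeft := by
  have polar_eq_zero (x y : V) : g.toQuadraticMap.polarBilin x y = 0 ↔ g x y = 0 := by
    rw [polarBilin_apply_apply, LinearMap.BilinMap.polar_toQuadraticMap, ← hg.eq x y]
    exact two_mul (g x y) ▸ two_regular.mul_left_eq_zero_iff
  rw [← hg.isRefl.nondegenerate_iff_separatingLeft]
  simp only [LinearMap.Nondegenerate, LinearMap.SeparatingLeft, LinearMap.SeparatingRight,
    polar_eq_zero]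

theorem stmt8_general {ι K V A : Type*} [Fintype ι] [DecidableEq ι] [Field K] [AddCommGroup V]
    [Module K V] [AddTorsor V A] (b : AffineBasis ι K A) (Q : QuadraticForm K V) :
    Q.polarBilin.Nondegenerate ↔ IsUnit (cayleyMenger Q b) := by
  obtain ⟨i⟩ := b.nonempty
  have gram : LinearMap.BilinForm.toMatrix (b.basisOf i) Q.polarBilin =
      of fun j k : {j // j ≠ i} => polar Q (b j -ᵥ b i) (b k -ᵥ b i) := by
    ext j k
    simp [LinearMap.BilinForm.toMatrix_apply]
  have det_isUnit : IsUnit (cayleyMenger Q b).det ↔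
      (LinearMap.BilinForm.toMatrix (b.basisOf i) Q.polarBilin).det ≠ 0 := by
    rw [gram, det_cayleyMenger Q b i, isUnit_iff_ne_zero]
    simp
  rw [isUnit_iff_isUnit_det, det_isUnit]
  exact LinearMap.BilinForm.nondegenerate_iff_det_ne_zero (b.basisOf i)

/-- Let `(R_0, …, R_n)` be an affine basis of an `n`-dimensional real
affine space `A` and `g` a symmetric bilinear form on `V`.  With
`D i j = g(R_j − R_i, R_j − R_i)`, the form `g` is nondegenerate iff the bordered
`(n+2)×(n+2)` Cayley–Menger matrix (with `D` in the corner, a row and column of ones,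
and `0` in the last diagonal entry) is invertible. -/
theorem stmt8 {V A : Type*} [AddCommGroup V] [Module ℝ V] [AddTorsor V A]
    [FiniteDimensional ℝ V] {n : ℕ} (hn : Module.finrank ℝ V = n)
    (b : AffineBasis (Fin (n + 1)) ℝ A)
    (g : LinearMap.BilinForm ℝ V) (hg : ∀ x y, g x y = g y x) :
    (∀ v : V, (∀ x : V, g v x = 0) → v = 0) ↔
      IsUnit (Matrix.of fun i j : Fin (n + 2) =>
        if hi : (i : ℕ) < n + 1 then
          if hj : (j : ℕ) < n + 1 then
            g (b ⟨(j : ℕ), hj⟩ -ᵥ b ⟨(i : ℕ), hi⟩)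
              (b ⟨(j : ℕ), hj⟩ -ᵥ b ⟨(i : ℕ), hi⟩)
          else (1 : ℝ)
        else if (j : ℕ) < n + 1 then (1 : ℝ) else (0 : ℝ)) := by
  rw [of_dite_eq_submatrix_borderOnes fun i j => g (b j -ᵥ b i) (b j -ᵥ b i),
    isUnit_submatrix_equiv]
  exact (nondegenerate_polarBilin_toQuadraticMap_iff_separatingLeft
    (IsRegular.of_ne_zero two_ne_zero).left ⟨hg⟩).symm.trans (stmt8_general b g.toQuadraticMap)
end

section
/- Let A be a finite-dimensional real affine space over V with dim V = n, let g be a symmetric bilinear form on V, and let (R_0, …, R_n) be an affine basis of A. Set D_{ij} = g(R_j − R_i, R_j − R_i). Then for all points P, Q ∈ A with barycentric coordinates (p_0, …, p_n) and (q_0, …, q_n) respectively: g(Q − P, Q − P) = −(1/2)·Σ_{i,j} (q_i − p_i)(q_j − p_j)·D_{ij}. -/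
/-!
A quadratic map `F` satisfies `F (x - y) = F x + F y - polar F x y`. Take `x = u i` and `y = u j`,
weight by `w i * w j` and sum over `i` and `j`: the diagonal terms `F (u i)` and `F (u j)` vanish
when `∑ i, w i = 0`, and the polar terms collapse by bilinearity to `polar F v v = 2 • F v`, where
`v = ∑ i, w i • u i`. The differences of the barycentric coordinates of two points are weights of
this kind, and the theorem is the case `F x = g x x`.
-/

section QuadraticMap

open Finset QuadraticMap

variable {R M N : Type*} [CommRing R] [AddCommGroup M] [AddCommGroup N] [Module R M] [Module R N]
  (F : QuadraticMap R M N) {ι κ : Type*} {s : Finset ι} {t : Finset κ} {w : ι → R} {w' : κ → R}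

theorem quadraticMap_map_sub (x y : M) : F (x - y) = F x + F y - polar F x y := by
  rw [sub_eq_add_neg, QuadraticMap.map_add F, F.map_neg, polar_neg_right, sub_eq_add_neg]

theorem polar_sum_smul_sum_smul (u : ι → M) (v : κ → M) :
    polar F (∑ i ∈ s, w i • u i) (∑ j ∈ t, w' j • v j) =
      ∑ i ∈ s, ∑ j ∈ t, (w i * w' j) • polar F (u i) (v j) := by
  simp only [← polarBilin_apply_apply, LinearMap.map_sum₂, LinearMap.map_smul₂]
  simp only [map_sum, map_smul, smul_sum, smul_smul]

theorem polar_sum_smul_sum_smul_of_sum_eq_zero (u : ι → M) (hw : ∑ i ∈ s, w i = 0) (v : κ → M)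
    (hw' : ∑ j ∈ t, w' j = 0) :
    polar F (∑ i ∈ s, w i • u i) (∑ j ∈ t, w' j • v j) =
      -∑ i ∈ s, ∑ j ∈ t, (w i * w' j) • F (u i - v j) := by
  have hleft : ∑ i ∈ s, ∑ j ∈ t, (w i * w' j) • F (u i) = 0 := by
    simp only [← sum_smul, ← mul_sum, hw', mul_zero, zero_smul, sum_const_zero]
  have hright : ∑ i ∈ s, ∑ j ∈ t, (w i * w' j) • F (v j) = 0 := by
    rw [sum_comm]
    simp only [← sum_smul, ← sum_mul, hw, zero_mul, zero_smul, sum_const_zero]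
  simp only [polar_sum_smul_sum_smul, quadraticMap_map_sub, smul_sub, smul_add, sum_sub_distrib,
    sum_add_distrib, hleft, hright, zero_add, zero_sub, neg_neg]

theorem polar_weightedVSub {P : Type*} [AddTorsor M P] (p : ι → P) (hw : ∑ i ∈ s, w i = 0)
    (q : κ → P) (hw' : ∑ j ∈ t, w' j = 0) :
    polar F (s.weightedVSub p w) (t.weightedVSub q w') =
      -∑ i ∈ s, ∑ j ∈ t, (w i * w' j) • F (p i -ᵥ q j) := by
  simp only [weightedVSub_apply, polar_sum_smul_sum_smul_of_sum_eq_zero F _ hw _ hw',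
    vsub_sub_vsub_cancel_right]

end QuadraticMap

section AffineBasis

open Finset

variable {R V A ι : Type*} [Ring R] [AddCommGroup V] [Module R V] [AddTorsor V A] [Fintype ι]
  (b : AffineBasis ι R A) (P Q : A)

theorem sum_coord_sub_coord_eq_zero : ∑ i, (b.coord i Q - b.coord i P) = 0 := by
  simp only [sum_sub_distrib, b.sum_coord_apply_eq_one, sub_self]

theorem weightedVSub_coord_sub_coord :
    univ.weightedVSub b (fun i ↦ b.coord i Q - b.coord i P) = Q -ᵥ P :=
  calc univ.weightedVSub b (fun i ↦ b.coord i Q - b.coord i P)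
      = univ.affineCombination R b (fun i ↦ b.coord i Q) -ᵥ
          univ.affineCombination R b (fun i ↦ b.coord i P) :=
        (univ.affineCombination_vsub _ _ b).symm
    _ = Q -ᵥ P := by simp only [b.affineCombination_coord_eq_self]

end AffineBasis

theorem stmt13_general {R V N A ι : Type*} [CommRing R] [AddCommGroup V] [Module R V]
    [AddCommGroup N] [Module R N] [AddTorsor V A] [Fintype ι] (b : AffineBasis ι R A)
    (F : QuadraticMap R V N) (P Q : A) :
    2 • F (Q -ᵥ P) =
      -∑ i, ∑ j, ((b.coord i Q - b.coord i P) * (b.coord j Q - b.coord j P)) •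
        F (b j -ᵥ b i) := by
  have hw := sum_coord_sub_coord_eq_zero b P Q
  rw [← F.polar_self, ← weightedVSub_coord_sub_coord b P Q, polar_weightedVSub F b hw b hw,
    Finset.sum_comm]
  simp only [mul_comm]

/-- Let `(R_0, …, R_n)` be an affine basis of an `n`-dimensional
real affine space `A` and `g` a symmetric bilinear form on `V`.  With
`D i j = g(R_j − R_i, R_j − R_i)`, for all `P, Q ∈ A` with barycentric coordinates
`p`, `q`: `g(Q − P, Q − P) = −(1/2)·Σ_{i,j} (q_i − p_i)(q_j − p_j)·D i j`. -/
theorem stmt13 {V A : Type*} [AddCommGroup V] [Module ℝ V] [AddTorsor V A]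
    [FiniteDimensional ℝ V] {n : ℕ} (hn : Module.finrank ℝ V = n)
    (b : AffineBasis (Fin (n + 1)) ℝ A)
    (g : LinearMap.BilinForm ℝ V) (hgs : ∀ x y, g x y = g y x) (P Q : A) :
    g (Q -ᵥ P) (Q -ᵥ P) =
      -(1/2 : ℝ) * ∑ i : Fin (n + 1), ∑ j : Fin (n + 1),
        (b.coord i Q - b.coord i P) * (b.coord j Q - b.coord j P) *
          g (b j -ᵥ b i) (b j -ᵥ b i) := by
  have h := stmt13_general b (LinearMap.BilinMap.toQuadraticMap g) P Q
  simp only [LinearMap.BilinMap.toQuadraticMap_apply, nsmul_eq_mul, Nat.cast_ofNat,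
    smul_eq_mul] at h
  linarith
end

section
/- Let A be a finite-dimensional real affine space over V with dim V = n ≥ 1, let g be a symmetric bilinear form on V, and let (R_0, …, R_n) be an affine basis of A. Set D_{ij} = g(R_j − R_i, R_j − R_i) for 0 ≤ i, j ≤ n, let M be the (n+2)×(n+2) symmetric matrix with M_{ij} = (1/2)·D_{ij} for i, j ≤ n, M_{i,n+1} = M_{n+1,i} = 1 for i ≤ n, and M_{n+1,n+1} = 0, and let N be the (n+2)×(n+2) block-diagonal matrix with first block [[0,1],[1,0]] and second block −G, where G_{ij} = g(R_i − R_0, R_j − R_0) for 1 ≤ i, j ≤ n. Then M and N are congruent: there exists an invertible real (n+2)×(n+2) matrix S with Sᵀ·M·S = N. -/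
/-!
Order the indices of the bordered matrix as `0, n + 1, 1, …, n`. Since `D 0 0 = 0`, its leading
`2 × 2` block is the hyperbolic plane `[[0, 1], [1, 0]]`, which is invertible, so the matrix is
congruent to the direct sum of that block and its Schur complement. The Schur complement has the
entries `D k l - D k 0 - D 0 l`; when `D i j = Q (R j - R i)` for a quadratic form `Q`, these are
`-polar Q (R k - R 0) (R l - R 0)` by polarization. The case `Q v = g v v / 2` has polar form `g`.
-/

open Matrix QuadraticMap

section Congruence

variable {R m n : Type*} [CommRing R] [Fintype m] [DecidableEq m] [Fintype n] [DecidableEq n]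

/-- Congruence of square matrices: they represent the same bilinear form in two bases. -/
def IsCongruent (M N : Matrix m m R) : Prop :=
  ∃ S : Matrix m m R, IsUnit S ∧ Sᵀ * M * S = N

lemma IsCongruent.of_submatrix {M N : Matrix m m R} (e f : n ≃ m)
    (h : IsCongruent (M.submatrix e e) (N.submatrix f f)) : IsCongruent M N := by
  obtain ⟨S, hS, hSMN⟩ := h
  refine ⟨S.submatrix e.symm f.symm, (isUnit_submatrix_equiv _ _).2 hS, ?_⟩
  calc (S.submatrix e.symm f.symm)ᵀ * M * S.submatrix e.symm f.symm
      = (Sᵀ * M.submatrix e e * S).submatrix f.symm f.symm := by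
        simp [← submatrix_mul_equiv _ _ _ e.symm]
    _ = N := by simp [hSMN]

lemma isCongruent_fromBlocks_schur {A : Matrix m m R} [Invertible A] (hA : A.IsSymm)
    (B : Matrix m n R) (D : Matrix n n R) :
    IsCongruent (fromBlocks A B Bᵀ D) (fromBlocks A 0 0 (D - Bᵀ * ⅟A * B)) := by
  have hAinv : (⅟A)ᵀ = ⅟A := by
    rw [invOf_eq_nonsing_inv, transpose_nonsing_inv, hA.eq]
  refine ⟨fromBlocks 1 (-(⅟A * B)) 0 1, ?_, ?_⟩
  · rw [isUnit_fromBlocks_zero₂₁]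
    exact ⟨isUnit_one, isUnit_one⟩
  · simp only [fromBlocks_transpose, fromBlocks_multiply, transpose_neg, transpose_mul, hAinv,
      transpose_one, transpose_zero, Matrix.mul_assoc, Matrix.neg_mul, Matrix.mul_neg,
      Matrix.one_mul, Matrix.mul_one, Matrix.zero_mul, Matrix.mul_zero, invOf_mul_self,
      Matrix.mul_invOf_cancel_left, add_zero, neg_add_cancel, neg_zero, zero_add, sub_eq_neg_add]

end Congruence

section Bordered

variable {R : Type*} [CommRing R]

lemma isCongruent_fromBlocks_hyperbolic {ι : Type*} [Fintype ι] [DecidableEq ι] (a : ι → R)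
    (D : Matrix ι ι R) :
    IsCongruent (fromBlocks !![0, 1; 1, 0] (of ![a, 1]) (of ![a, 1])ᵀ D)
      (fromBlocks !![0, 1; 1, 0] 0 0 (of fun k l => D k l - a k - a l)) := by
  have hsq : (!![0, 1; 1, 0] : Matrix (Fin 2) (Fin 2) R) * !![0, 1; 1, 0] = 1 := by
    simp [one_fin_two]
  let : Invertible (!![0, 1; 1, 0] : Matrix (Fin 2) (Fin 2) R) := ⟨_, hsq, hsq⟩
  have hschur : D - (of ![a, 1])ᵀ * (!![0, 1; 1, 0] : Matrix (Fin 2) (Fin 2) R) * of ![a, 1] =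
      of fun k l => D k l - a k - a l := by
    ext k l
    simp [mul_apply, Fin.sum_univ_two]
    ring
  rw [← hschur]
  exact isCongruent_fromBlocks_schur (by ext i j; fin_cases i <;> fin_cases j <;> rfl) _ D

variable {n : ℕ}

/-- The matrix `D` with a last row and column of ones adjoined, with `0` in the corner, as in a
Cayley–Menger matrix. -/
def bordered (D : Matrix (Fin (n + 1)) (Fin (n + 1)) R) : Matrix (Fin (n + 2)) (Fin (n + 2)) R :=
  of fun i j =>
    if hi : (i : ℕ) < n + 1 then
      if hj : (j : ℕ) < n + 1 then D ⟨i, hi⟩ ⟨j, hj⟩ else 1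
    else if (j : ℕ) < n + 1 then 1 else 0

/-- The block sum of the hyperbolic plane `[[0, 1], [1, 0]]` and `C` without its row and column of
index `0`; keeping index `0` lets `C` be indexed by all the points. -/
def hyperbolicSum (C : Matrix (Fin (n + 1)) (Fin (n + 1)) R) :
    Matrix (Fin (n + 2)) (Fin (n + 2)) R :=
  of fun i j =>
    if ((i : ℕ) = 0 ∧ (j : ℕ) = 1) ∨ ((i : ℕ) = 1 ∧ (j : ℕ) = 0) then 1
    else if 2 ≤ (i : ℕ) ∧ 2 ≤ (j : ℕ) then
      C ⟨(i : ℕ) - 1, by have := i.isLt; omega⟩ ⟨(j : ℕ) - 1, by have := j.isLt; omega⟩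
    else 0

/-- The ordering `0, n + 1, 1, …, n` of `Fin (n + 2)`, in which the first two basis vectors span
a hyperbolic plane for `bordered D` when `D 0 0 = 0`. -/
noncomputable def borderedEquiv (n : ℕ) : Fin 2 ⊕ Fin n ≃ Fin (n + 2) :=
  .ofBijective (Sum.elim ![0, Fin.last (n + 1)] fun k => k.succ.castSucc) <| by
    refine (Fintype.bijective_iff_injective_and_card _).2 ⟨?_, by simp [add_comm]⟩
    refine Function.Injective.sumElim ?_ ?_ ?_
    · exact injective_pair_iff_ne.2 Fin.last_pos.ne
    · exact (Fin.castSucc_injective _).comp (Fin.succ_injective n)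
    · exact Fin.forall_fin_two.2
        ⟨fun k => (Fin.castSucc_pos k.succ_pos).ne, fun k => (Fin.castSucc_lt_last k.succ).ne'⟩

/-- The standard ordering of `Fin (n + 2)`, split after its first two elements. -/
noncomputable def hyperbolicSumEquiv (n : ℕ) : Fin 2 ⊕ Fin n ≃ Fin (n + 2) :=
  .ofBijective (Sum.elim ![0, 1] fun k => k.succ.succ) <| by
    refine (Fintype.bijective_iff_injective_and_card _).2 ⟨?_, by simp [add_comm]⟩
    refine Function.Injective.sumElim ?_ ?_ ?_
    · exact injective_pair_iff_ne.2 zero_ne_one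
    · exact (Fin.succ_injective _).comp (Fin.succ_injective n)
    · simp [Fin.forall_fin_two, Fin.ext_iff]

lemma bordered_submatrix_borderedEquiv {D : Matrix (Fin (n + 1)) (Fin (n + 1)) R}
    (hD : D.IsSymm) (h0 : D 0 0 = 0) :
    (bordered D).submatrix (borderedEquiv n) (borderedEquiv n) =
      fromBlocks !![0, 1; 1, 0] (of ![fun k => D 0 k.succ, 1]) (of ![fun k => D 0 k.succ, 1])ᵀ
        (D.submatrix Fin.succ Fin.succ) := by
  have hD0 (k : Fin n) : D k.succ 0 = D 0 k.succ := hD.apply 0 k.succ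
  have hz (h : 0 < n + 1) : (⟨0, h⟩ : Fin (n + 1)) = 0 := rfl
  have hs (k : Fin n) (h) : (⟨(k : ℕ) + 1, h⟩ : Fin (n + 1)) = k.succ := rfl
  ext (i | k) (j | l) <;> (try fin_cases i) <;> (try fin_cases j) <;>
    simp [bordered, borderedEquiv, h0, hD0, hz, hs]

lemma hyperbolicSum_submatrix_hyperbolicSumEquiv (C : Matrix (Fin (n + 1)) (Fin (n + 1)) R) :
    (hyperbolicSum C).submatrix (hyperbolicSumEquiv n) (hyperbolicSumEquiv n) =
      fromBlocks !![0, 1; 1, 0] 0 0 (C.submatrix Fin.succ Fin.succ) := by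
  have hs (k : Fin n) (h) : (⟨(k : ℕ) + 1, h⟩ : Fin (n + 1)) = k.succ := rfl
  ext (i | k) (j | l) <;> (try fin_cases i) <;> (try fin_cases j) <;>
    simp [hyperbolicSum, hyperbolicSumEquiv, hs]

theorem isCongruent_bordered_hyperbolicSum {D : Matrix (Fin (n + 1)) (Fin (n + 1)) R}
    (hD : D.IsSymm) (h0 : D 0 0 = 0) :
    IsCongruent (bordered D) (hyperbolicSum (of fun i j => D i j - D i 0 - D 0 j)) := by
  apply IsCongruent.of_submatrix (borderedEquiv n) (hyperbolicSumEquiv n)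
  rw [bordered_submatrix_borderedEquiv hD h0, hyperbolicSum_submatrix_hyperbolicSumEquiv]
  convert isCongruent_fromBlocks_hyperbolic (fun k : Fin n => D 0 k.succ)
    (D.submatrix Fin.succ Fin.succ) using 2
  ext k l
  simp [hD.apply 0 k.succ]

end Bordered

section QuadraticForm

variable {R V A : Type*} [CommRing R] [AddCommGroup V] [Module R V] [AddTorsor V A]

lemma quadraticForm_vsub_sub_sub_eq_neg_polar (Q : QuadraticForm R V) (p q r : A) :
    Q (r -ᵥ q) - Q (p -ᵥ q) - Q (r -ᵥ p) = -polar Q (q -ᵥ p) (r -ᵥ p) := by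
  rw [← polar_neg_left, neg_vsub_eq_vsub_rev, polar, add_comm (p -ᵥ q), vsub_add_vsub_cancel]

lemma polar_toQuadraticMap_smul_of_add_self_eq_one {g : LinearMap.BilinForm R V}
    (hg : ∀ x y, g x y = g y x) {c : R} (hc : c + c = 1) (x y : V) :
    polar (c • g).toQuadraticMap x y = g x y := by
  rw [LinearMap.BilinMap.polar_toQuadraticMap]
  simp only [LinearMap.smul_apply, hg y x, ← add_smul, hc, one_smul]

theorem stmt14_general {n : ℕ} (p : Fin (n + 1) → A) (Q : QuadraticForm R V) :
    IsCongruent (bordered (of fun i j => Q (p j -ᵥ p i)))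
      (hyperbolicSum (of fun i j => -polar Q (p i -ᵥ p 0) (p j -ᵥ p 0))) := by
  simp only [← quadraticForm_vsub_sub_sub_eq_neg_polar]
  refine isCongruent_bordered_hyperbolicSum (IsSymm.ext fun i j => ?_) (by simp)
  simp only [of_apply, ← neg_vsub_eq_vsub_rev (p j) (p i), QuadraticMap.map_neg]

end QuadraticForm

/-- Let `(R_0, …, R_n)` (`n ≥ 1`) be an affine basis of an
`n`-dimensional real affine space `A`, `g` a symmetric bilinear form on `V`, and
`D i j = g(R_j − R_i, R_j − R_i)`.  The bordered `(n+2)×(n+2)` matrix `M` with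
`(1/2)·D` in the corner, ones in the last row/column and `0` in the last diagonal
entry is congruent to the block-diagonal matrix `N = [[0,1],[1,0]] ⊕ (−G)`, where
`G i j = g(R_i − R_0, R_j − R_0)` for `1 ≤ i, j ≤ n`. -/
theorem stmt14 {V A : Type*} [AddCommGroup V] [Module ℝ V] [AddTorsor V A]
    [FiniteDimensional ℝ V] {n : ℕ} (hn1 : 1 ≤ n)
    (hn : Module.finrank ℝ V = n) (b : AffineBasis (Fin (n + 1)) ℝ A)
    (g : LinearMap.BilinForm ℝ V) (hgs : ∀ x y, g x y = g y x) :
    ∃ S : Matrix (Fin (n + 2)) (Fin (n + 2)) ℝ, IsUnit S ∧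
      S.transpose *
        (Matrix.of fun i j : Fin (n + 2) =>
          if hi : (i : ℕ) < n + 1 then
            if hj : (j : ℕ) < n + 1 then
              (1/2 : ℝ) * g (b ⟨(j : ℕ), hj⟩ -ᵥ b ⟨(i : ℕ), hi⟩)
                (b ⟨(j : ℕ), hj⟩ -ᵥ b ⟨(i : ℕ), hi⟩)
            else 1
          else if (j : ℕ) < n + 1 then 1 else 0) * S =
      Matrix.of fun i j : Fin (n + 2) =>
        if ((i : ℕ) = 0 ∧ (j : ℕ) = 1) ∨ ((i : ℕ) = 1 ∧ (j : ℕ) = 0) then (1 : ℝ)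
        else if 2 ≤ (i : ℕ) ∧ 2 ≤ (j : ℕ) then
          -g (b ⟨(i : ℕ) - 1, by have := i.isLt; omega⟩ -ᵥ b 0)
            (b ⟨(j : ℕ) - 1, by have := j.isLt; omega⟩ -ᵥ b 0)
        else 0 := by
  simpa only [polar_toQuadraticMap_smul_of_add_self_eq_one hgs (add_halves 1)] using!
    stmt14_general b ((1 / 2 : ℝ) • g).toQuadraticMap
end
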